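/- Let p₁₀, p₀₁ and p₃₀, p₂₁, p₁₂, p₀₃ be real numbers with p₁₀² + p₀₁² ≠ 0, and set P₁(θ) = p₁₀ cos θ + p₀₁ sin θ and P₃(θ) = p₃₀ cos³θ + p₂₁ cos²θ sin θ + p₁₂ cos θ sin²θ + p₀₃ sin³θ. Then the equation dr/dθ = r(P₁(θ) r + P₃(θ) r³) has a center at r = 0 if and only if p₁₀p₂₁ − p₀₁p₁₂ + 3p₁₀p₀₃ − 3p₀₁p₃₀ = 0 and p₃₀p₀₁³ − p₂₁p₀₁²p₁₀ + p₁₂p₀₁p₁₀² − p₀₃p₁₀³ = 0. -/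

import Mathlib

open Real

/-- A 2π-periodic scalar ODE `dr/dθ = F θ r` has a center at `r = 0` if every solution
with `|r 0|` sufficiently small is defined on `[0, 2π]` and satisfies `r (2π) = r 0`. -/
def HasCenterAtZero (F : ℝ → ℝ → ℝ) : Prop :=
  ∃ ε > (0 : ℝ), ∀ r : ℝ → ℝ, |r 0| < ε →
    (∀ θ ∈ Set.Icc (0 : ℝ) (2 * Real.pi), HasDerivAt r (F θ (r θ)) θ) →
    r (2 * Real.pi) = r 0

/-!
Let `σ` be a primitive of `P₁`. Along a solution of `dr/dθ = P₁ r² + P₃ r⁴` write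
`1 / r = 1 / ρ - σ + q`; then `q' = -P₃ r²`, and the solution is closed iff `q (2π) = 0`.
Expanding `r²` twice gives, with the moments `mₖ = ∫ P₃ σᵏ`,
`q (2π) = -ρ² (m₀ + 2 m₁ ρ + 3 m₂ ρ² + (4 m₃ + m₀²) ρ³) + O(ρ⁶)`,
so at a center `m₀ = m₁ = m₂ = m₃ = 0`.

A rotation puts `P₁` in the form `k sin (θ - α)`, so that `σ = -k cos (θ - α)`. If `P₃` has
coefficients `a, b, c, d` in the rotated coordinates, then `m₁ = m₃ = 0` says `3 a + c = 0` and
`5 a + c = 0`, that is, `a = c = 0`. Conversely, if `a = c = 0` then `P₁` and `P₃` are both odd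
about `θ = α`, so the equation is reversible and every solution is symmetric about `α` and `α + π`.
-/

open Set Filter Topology Asymptotics
open scoped NNReal

theorem isBigO_intervalIntegral_prod_principal {ι E : Type*} [NormedAddCommGroup E]
    [NormedSpace ℝ E] {l : Filter ι} {f : ι → ℝ → E} {g : ι → ℝ} {a b : ℝ}
    (h : (fun p : ι × ℝ => f p.1 p.2) =O[l ×ˢ 𝓟 (Icc a b)] fun p => g p.1) :
    (fun p : ι × ℝ => ∫ s in a..p.2, f p.1 s) =O[l ×ˢ 𝓟 (Icc a b)] fun p => g p.1 := by
  obtain ⟨C, hC⟩ := h.bound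
  refine .of_bound (C * (b - a)) ?_
  rw [eventually_prod_principal_iff] at hC ⊢
  filter_upwards [hC] with i hi t ht
  have hbound : ∀ s ∈ uIoc a t, ‖f i s‖ ≤ C * ‖g i‖ := fun s hs => by
    rw [uIoc_of_le ht.1] at hs
    exact hi s ⟨hs.1.le, hs.2.trans ht.2⟩
  calc ‖∫ s in a..t, f i s‖ ≤ C * ‖g i‖ * |t - a| :=
        intervalIntegral.norm_integral_le_of_norm_le_const hbound
    _ ≤ C * ‖g i‖ * (b - a) := by
        have : 0 ≤ C * ‖g i‖ := (norm_nonneg _).trans (hi t ht)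
        rw [abs_of_nonneg (sub_nonneg.2 ht.1)]
        gcongr
        exact ht.2
    _ = C * (b - a) * ‖g i‖ := by ring

theorem isBigO_one_comp_snd {ι X E : Type*} [TopologicalSpace X] [NormedAddCommGroup E]
    {l : Filter ι} {s : Set X} {f : X → E} (hs : IsCompact s) (hf : ContinuousOn f s) :
    (fun p : ι × X => f p.2) =O[l ×ˢ 𝓟 s] fun _ => (1 : ℝ) :=
  (hf.isBigO_principal hs (by simp : ‖(1 : ℝ)‖ ≠ 0)).comp_tendsto tendsto_snd

theorem eq_zero_of_isBigO_sum_mul_pow {𝕜 : Type*} [NontriviallyNormedField 𝕜] {n : ℕ} {c : ℕ → 𝕜}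
    (h : (fun x : 𝕜 => ∑ k ∈ Finset.range n, c k * x ^ k) =O[𝓝[≠] 0] (· ^ n)) :
    ∀ k < n, c k = 0 := by
  induction n generalizing c with
  | zero => simp
  | succ n ih =>
    have hsum (x : 𝕜) : ∑ k ∈ Finset.range (n + 1), c k * x ^ k =
        c 0 + x * ∑ k ∈ Finset.range n, c (k + 1) * x ^ k := by
      rw [Finset.sum_range_succ', Finset.mul_sum, pow_zero, mul_one, add_comm]
      congr 1
      exact Finset.sum_congr rfl fun k _ => by ring
    simp only [hsum] at h
    have hc : c 0 = 0 := by
      have hpow : Tendsto (fun x : 𝕜 => x ^ (n + 1)) (𝓝[≠] 0) (𝓝 0) :=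
        ((continuous_pow (n + 1)).tendsto' 0 0 (by simp)).mono_left nhdsWithin_le_nhds
      have hpoly : Tendsto (fun x : 𝕜 => c 0 + x * ∑ k ∈ Finset.range n, c (k + 1) * x ^ k)
          (𝓝[≠] 0) (𝓝 (c 0)) :=
        (Continuous.tendsto' (by fun_prop) 0 (c 0) (by simp)).mono_left nhdsWithin_le_nhds
      exact tendsto_nhds_unique hpoly (h.trans_tendsto hpow)
    have htail : (fun x : 𝕜 => ∑ k ∈ Finset.range n, c (k + 1) * x ^ k) =O[𝓝[≠] 0] (· ^ n) := by
      refine ((isBigO_refl (·⁻¹) (𝓝[≠] (0 : 𝕜))).mul h).congr' ?_ ?_ <;>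
        filter_upwards [self_mem_nhdsWithin] with x (hx : x ≠ 0)
      · rw [hc, zero_add, inv_mul_cancel_left₀ hx]
      · rw [pow_succ', inv_mul_cancel_left₀ hx]
    rintro (_ | k) hk
    · exact hc
    · exact ih htail k (by lia)

theorem one_sub_sq_mul_sum_succ_mul_pow {R : Type*} [CommRing R] (n : ℕ) (y : R) :
    (1 - y) ^ 2 * ∑ k ∈ Finset.range n, (k + 1) * y ^ k = 1 - y ^ n * (n + 1 - n * y) := by
  induction n with
  | zero => simp
  | succ n ih =>
    rw [Finset.sum_range_succ, mul_add, ih]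
    push_cast
    ring

theorem isBigO_inv_one_sub_sq_sub_sum {𝕜 : Type*} [NontriviallyNormedField 𝕜] (n : ℕ) :
    (fun y : 𝕜 => ((1 - y) ^ 2)⁻¹ - ∑ k ∈ Finset.range n, (k + 1) * y ^ k) =O[𝓝 0] (· ^ n) := by
  have hcont : ContinuousAt (fun y : 𝕜 => (n + 1 - n * y) / (1 - y) ^ 2) 0 :=
    ContinuousAt.div (by fun_prop) (by fun_prop) (by simp)
  have hprod := (isBigO_refl (fun y : 𝕜 => y ^ n) (𝓝 0)).mul (hcont.tendsto.isBigO_one 𝕜)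
  refine hprod.congr' ?_ (.of_forall fun y => mul_one _)
  filter_upwards [eventually_ne_nhds zero_ne_one] with y hy
  have hy' : (1 - y) ^ 2 ≠ 0 := pow_ne_zero 2 (sub_ne_zero.2 hy.symm)
  rw [← mul_right_inj' hy', mul_sub, mul_inv_cancel₀ hy', one_sub_sq_mul_sum_succ_mul_pow]
  field_simp
  ring

theorem integral_mul_integral_eq_sq_div_two {B : ℝ → ℝ} (hB : Continuous B) (a b : ℝ) :
    ∫ t in a..b, B t * ∫ s in a..t, B s = (∫ t in a..b, B t) ^ 2 / 2 := by
  have hprim (t : ℝ) : HasDerivAt (fun t => ∫ s in a..t, B s) (B t) t :=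
    (hB.integral_hasStrictDerivAt a t).hasDerivAt
  have hderiv : ∀ t ∈ uIcc a b,
      HasDerivAt (fun t => (∫ s in a..t, B s) ^ 2 / 2) (B t * ∫ s in a..t, B s) t := fun t _ =>
    (((hprim t).fun_pow 2).div_const 2).congr_deriv (by ring)
  have hcont : Continuous fun t => B t * ∫ s in a..t, B s :=
    hB.mul (continuous_iff_continuousAt.2 fun t => (hprim t).continuousAt)
  rw [intervalIntegral.integral_eq_sub_of_hasDerivAt hderiv (hcont.intervalIntegrable _ _)]
  simp

theorem integral_comp_sub_of_periodic {E : Type*} [NormedAddCommGroup E] [NormedSpace ℝ E]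
    {f : ℝ → E} {T : ℝ} (hf : Function.Periodic f T) (α : ℝ) :
    ∫ t in 0..T, f (t - α) = ∫ t in 0..T, f t := by
  rw [intervalIntegral.integral_comp_sub_right]
  simpa [sub_eq_neg_add] using hf.intervalIntegral_add_eq (-α) 0

theorem integral_cos_pow_even_pos (n : ℕ) : 0 < ∫ θ in 0..2 * π, cos θ ^ (2 * n) := by
  induction n with
  | zero => simp [pi_pos]
  | succ n ih =>
    rw [mul_add, mul_one, integral_cos_pow, sin_two_pi, sin_zero, mul_zero, mul_zero, sub_self,
      zero_div, zero_add]
    positivity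

theorem exists_mul_cos_sin (x y : ℝ) : ∃ k α : ℝ, x = k * cos α ∧ y = k * sin α :=
  ⟨‖(⟨x, y⟩ : ℂ)‖, Complex.arg ⟨x, y⟩, (Complex.norm_mul_cos_arg ⟨x, y⟩).symm,
    (Complex.norm_mul_sin_arg ⟨x, y⟩).symm⟩

/-! ### Existence and symmetry of solutions -/

theorem exists_hasDerivAt_of_lipschitzWith {E : Type*} [NormedAddCommGroup E] [NormedSpace ℝ E]
    [CompleteSpace E] {f : ℝ → E → E} {a b t₀ : ℝ} {K L : ℝ≥0} (x₀ : E) (ht₀ : t₀ ∈ Icc a b)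
    (hlip : ∀ t ∈ Icc a b, LipschitzWith K (f t))
    (hcont : ∀ x, ContinuousOn (f · x) (Icc a b))
    (hbound : ∀ t ∈ Icc a b, ∀ x, ‖f t x‖ ≤ L) :
    ∃ u : ℝ → E, u t₀ = x₀ ∧ ∀ t ∈ Ioo a b, HasDerivAt u (f t (u t)) t := by
  set d : ℝ≥0 := ⟨max (b - t₀) (t₀ - a), le_max_of_le_left (sub_nonneg.2 ht₀.2)⟩
  have hpl : IsPicardLindelof f ⟨t₀, ht₀⟩ x₀ (L * d) 0 L K :=
    { lipschitzOnWith := fun t ht => (hlip t ht).lipschitzOnWith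
      continuousOn := fun x _ => hcont x
      norm_le := fun t ht x _ => hbound t ht x
      mul_max_le := (sub_zero (L * d : ℝ)).ge }
  obtain ⟨u, hu₀, hu⟩ := hpl.exists_eq_forall_mem_Icc_hasDerivWithinAt₀
  exact ⟨u, hu₀, fun t ht => (hu t (Ioo_subset_Icc_self ht)).hasDerivAt (Icc_mem_nhds ht.1 ht.2)⟩

theorem exists_hasDerivAt_smul_comp_sub {E : Type*} [NormedAddCommGroup E] [NormedSpace ℝ E]
    [CompleteSpace E] {b : ℝ → ℝ} {σ : ℝ → E} {φ : E → E} {K M : ℝ≥0} {T : ℝ} (hb : Continuous b)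
    (hσ : Continuous σ) (hφ : LipschitzWith K φ) (hφ_le : ∀ x, ‖φ x‖ ≤ M) (hT : 0 ≤ T) :
    ∃ u : ℝ → E, u 0 = 0 ∧ ∀ t ∈ Icc 0 T, HasDerivAt u (b t • φ (σ t - u t)) t := by
  obtain ⟨C, hC⟩ := (isCompact_Icc (a := -1) (b := T + 1)).exists_bound_of_continuousOn
    hb.continuousOn
  have hC' : ∀ t ∈ Icc (-1) (T + 1), ‖b t‖ ≤ C.toNNReal := fun t ht =>
    (hC t ht).trans (Real.le_coe_toNNReal C)
  have hlip : ∀ t ∈ Icc (-1) (T + 1),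
      LipschitzWith (C.toNNReal * K) fun x => b t • φ (σ t - x) := fun t ht =>
    .of_dist_le_mul fun x y => by
      calc dist (b t • φ (σ t - x)) (b t • φ (σ t - y))
          = ‖b t‖ * dist (φ (σ t - x)) (φ (σ t - y)) := dist_smul₀ ..
        _ ≤ C.toNNReal * (K * dist (σ t - x) (σ t - y)) := by
            gcongr
            exacts [hC' t ht, hφ.dist_le_mul _ _]
        _ = (C.toNNReal * K : ℝ≥0) * dist x y := by
            rw [dist_sub_left, NNReal.coe_mul, mul_assoc]
  have hcont (x : E) : ContinuousOn (fun t => b t • φ (σ t - x)) (Icc (-1) (T + 1)) :=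
    (hb.smul (hφ.continuous.comp (by fun_prop))).continuousOn
  have hbound : ∀ t ∈ Icc (-1) (T + 1), ∀ x, ‖b t • φ (σ t - x)‖ ≤ (C.toNNReal * M : ℝ≥0) := by
    intro t ht x
    rw [norm_smul, NNReal.coe_mul]
    gcongr
    exacts [hC' t ht, hφ_le _]
  obtain ⟨u, hu₀, hu⟩ := exists_hasDerivAt_of_lipschitzWith (t₀ := 0) 0
    ⟨by simp, by linarith⟩ hlip hcont hbound
  exact ⟨u, hu₀, fun t ht => hu t ⟨by linarith [ht.1], by linarith [ht.2]⟩⟩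

theorem lipschitzOnWith_inv_sq_Ici {c : ℝ≥0} (hc : 0 < c) :
    LipschitzOnWith (2 / c ^ 3) (fun x : ℝ => (x ^ 2)⁻¹) (Ici c) := by
  refine LipschitzOnWith.of_dist_le_mul fun x (hx : c ≤ x) y (hy : c ≤ y) => ?_
  have hc₀ : (0 : ℝ) < c := hc
  have hx₀ : 0 < x := hc₀.trans_le hx
  have hy₀ : 0 < y := hc₀.trans_le hy
  have hfactor : (x ^ 2)⁻¹ - (y ^ 2)⁻¹ = (x⁻¹ + y⁻¹) * (x⁻¹ * y⁻¹) * (y - x) := by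
    field_simp
    ring
  rw [Real.dist_eq, Real.dist_eq, hfactor, abs_mul, abs_of_pos (by positivity), abs_sub_comm y]
  gcongr
  calc (x⁻¹ + y⁻¹) * (x⁻¹ * y⁻¹) ≤ ((c : ℝ)⁻¹ + (c : ℝ)⁻¹) * ((c : ℝ)⁻¹ * (c : ℝ)⁻¹) := by gcongr
    _ = (2 / c ^ 3 : ℝ≥0) := by
        push_cast
        field_simp
        norm_num

theorem lipschitzWith_inv_sq_max {c : ℝ≥0} (hc : 0 < c) :
    LipschitzWith (2 / c ^ 3) fun x : ℝ => (max (c : ℝ) x ^ 2)⁻¹ := by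
  simpa [Function.comp_def] using lipschitzOnWith_univ.1
    ((lipschitzOnWith_inv_sq_Ici hc).comp (LipschitzWith.id.const_max (c : ℝ)).lipschitzOnWith
      fun x _ => le_max_left (c : ℝ) x)

theorem inv_sq_max_half_le (x : ℝ) : (max (1 / 2) x ^ 2)⁻¹ ≤ 4 := by
  calc (max (1 / 2) x ^ 2)⁻¹ ≤ ((1 / 2) ^ 2)⁻¹ := by
        gcongr
        exact le_max_left _ _
    _ = 4 := by norm_num

theorem eq_of_hasDerivAt_of_reversible {E : Type*} [NormedAddCommGroup E] [NormedSpace ℝ E]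
    {v : ℝ → E → E} (hv : LocallyLipschitz (Function.uncurry v)) {α d : ℝ} (hd : 0 ≤ d)
    (hrev : ∀ t x, v (2 * α - t) x = -v t x) {r : ℝ → E}
    (hr : ∀ t ∈ Icc (α - d) (α + d), HasDerivAt r (v t (r t)) t) : r (α - d) = r (α + d) := by
  have hr_cont : ContinuousOn r (Icc (α - d) (α + d)) := fun t ht =>
    (hr t ht).continuousAt.continuousWithinAt
  set s : Set E := r '' Icc (α - d) (α + d)
  obtain ⟨K, hK⟩ := hv.locallyLipschitzOn.exists_lipschitzOnWith_of_compact
    (isCompact_Icc.prod (isCompact_Icc.image_of_continuousOn hr_cont) :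
      IsCompact (Icc (α - d) (α + d) ×ˢ s))
  have hright : Icc α (α + d) ⊆ Icc (α - d) (α + d) := Icc_subset_Icc_left (by linarith)
  have hlip : ∀ t ∈ Ico α (α + d), LipschitzOnWith K (v t) s := fun t ht => by
    have hmaps : MapsTo (Prod.mk t) s (Icc (α - d) (α + d) ×ˢ s) := fun x hx =>
      ⟨hright (Ico_subset_Icc_self ht), hx⟩
    simpa [Function.comp_def] using hK.comp (LipschitzWith.prodMk_left t).lipschitzOnWith hmaps
  have hreflect : ∀ t ∈ Icc α (α + d), 2 * α - t ∈ Icc (α - d) (α + d) := fun t ht =>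
    ⟨by linarith [ht.2], by linarith [ht.1]⟩
  have hr_reflect : ∀ t ∈ Icc α (α + d),
      HasDerivAt (fun t => r (2 * α - t)) (v t (r (2 * α - t))) t := fun t ht => by
    simpa [hrev] using (hr _ (hreflect t ht)).comp_const_sub (2 * α) t
  have heq := ODE_solution_unique_of_mem_Icc_right hlip
    (fun t ht => (hr_reflect t ht).continuousAt.continuousWithinAt)
    (fun t ht => (hr_reflect t (Ico_subset_Icc_self ht)).hasDerivWithinAt)
    (fun t ht => mem_image_of_mem r (hreflect t (Ico_subset_Icc_self ht)))
    (hr_cont.mono hright)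
    (fun t ht => (hr t (hright (Ico_subset_Icc_self ht))).hasDerivWithinAt)
    (fun t ht => mem_image_of_mem r (hright (Ico_subset_Icc_self ht)))
    (by ring_nf)
  convert heq ⟨by linarith, le_rfl⟩ using 2
  ring

theorem hasCenterAtZero_of_reversible {F : ℝ → ℝ → ℝ}
    (hF : LocallyLipschitz (Function.uncurry F)) (hper : Function.Periodic F (2 * π)) {α : ℝ}
    (hrev : ∀ θ, F (2 * α - θ) = -F θ) : HasCenterAtZero F := by
  refine ⟨1, one_pos, fun r _ hr => ?_⟩
  set β := toIcoMod pi_pos 0 α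
  obtain ⟨hβ₀, hβ⟩ := toIcoMod_mem_Ico pi_pos 0 α
  rw [zero_add] at hβ
  have hrevβ : ∀ θ, F (2 * β - θ) = -F θ := fun θ => by
    have : 2 * β - θ = 2 * α - θ - toIcoDiv pi_pos 0 α • (2 * π) := by
      rw [show β = α - toIcoDiv pi_pos 0 α • π from (self_sub_toIcoDiv_zsmul ..).symm]
      simp only [zsmul_eq_mul]
      ring
    rw [this, hper.sub_zsmul_eq, hrev]
  have hrevβπ : ∀ θ, F (2 * (β + π) - θ) = -F θ := fun θ => by
    rw [show 2 * (β + π) - θ = 2 * β - θ + 2 * π by ring, hper, hrevβ]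
  have hfirst : r 0 = r (2 * β) := by
    have := eq_of_hasDerivAt_of_reversible (r := r) (α := β) (d := β) hF hβ₀
      (fun θ x => congrFun (hrevβ θ) x) fun θ hθ => hr θ ⟨by linarith [hθ.1], by linarith [hθ.2]⟩
    rwa [sub_self, ← two_mul] at this
  have hsecond : r (2 * β) = r (2 * π) := by
    have := eq_of_hasDerivAt_of_reversible (r := r) (α := β + π) (d := π - β) hF (by linarith)
      (fun θ x => congrFun (hrevβπ θ) x) fun θ hθ => hr θ ⟨by linarith [hθ.1], by linarith [hθ.2]⟩
    convert this using 2 <;> ring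
  exact (hfirst.trans hsecond).symm

/-! ### Variation of constants -/

/-- The solution with value `ρ` at `s = 0` of `dr/ds = r²`, that is, of `1 / r = 1 / ρ - s`;
it has the junk value `0` at the pole `s = 1 / ρ`. -/
noncomputable def radius (ρ s : ℝ) : ℝ := ρ / (1 - ρ * s)

theorem radius_sq (ρ s : ℝ) : radius ρ s ^ 2 = ρ ^ 2 * ((1 - ρ * s) ^ 2)⁻¹ := by
  rw [radius, div_pow, div_eq_mul_inv]

theorem radius_injective {ρ : ℝ} (hρ : ρ ≠ 0) : Function.Injective (radius ρ) := by
  intro s t h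
  rw [radius, radius, div_eq_mul_inv, div_eq_mul_inv] at h
  exact mul_left_cancel₀ hρ (sub_right_injective (inv_injective (mul_left_cancel₀ hρ h)))

/-- The right-hand side of `dr/dθ = r (A(θ) r + B(θ) r³)`. -/
def quarticField (A B : ℝ → ℝ) (θ r : ℝ) : ℝ := r * (A θ * r + B θ * r ^ 3)

/-- The correction `q` in the variation of constants `1 / r = 1 / ρ - σ + q` for
`quarticField σ' B` on `[0, T]`, with bounds that keep `r` away from its pole. -/
structure IsPhaseCorrection (B σ : ℝ → ℝ) (T ρ : ℝ) (q : ℝ → ℝ) : Prop where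
  map_zero : q 0 = 0
  abs_le_one : ∀ t ∈ Icc 0 T, |q t| ≤ 1
  half_le : ∀ t ∈ Icc 0 T, 1 / 2 ≤ 1 - ρ * (σ t - q t)
  hasDerivAt : ∀ t ∈ Icc 0 T, HasDerivAt q (-(B t * radius ρ (σ t - q t) ^ 2)) t

theorem IsPhaseCorrection.hasDerivAt_radius {A B σ q : ℝ → ℝ} {T ρ t : ℝ}
    (hq : IsPhaseCorrection B σ T ρ q) (hσ : HasDerivAt σ (A t) t) (ht : t ∈ Icc 0 T) :
    HasDerivAt (fun t => radius ρ (σ t - q t))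
      (quarticField A B t (radius ρ (σ t - q t))) t := by
  have hden : 1 - ρ * (σ t - q t) ≠ 0 := by linarith [hq.half_le t ht]
  have hphase := hσ.fun_sub (hq.hasDerivAt t ht)
  have hdiv := (hasDerivAt_const t ρ).fun_div ((hphase.const_mul ρ).const_sub 1) hden
  refine hdiv.congr_deriv ?_
  simp only [quarticField, radius]
  field_simp
  ring

/- Truncating the denominator at `1 / 2` makes the field globally Lipschitz and bounded; the
truncation is inactive for small `ρ`. -/
theorem exists_hasDerivAt_inv_sq_max_half {B σ : ℝ → ℝ} {T : ℝ} (hB : Continuous B)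
    (hσ : Continuous σ) (hT : 0 ≤ T) (ρ : ℝ) :
    ∃ q : ℝ → ℝ, q 0 = 0 ∧ ∀ t ∈ Icc 0 T,
      HasDerivAt q (-(B t * (ρ ^ 2 * (max (1 / 2) (1 - ρ * (σ t - q t)) ^ 2)⁻¹))) t := by
  have haffine : LipschitzWith ‖ρ‖₊ fun s : ℝ => 1 - ρ * s := .of_dist_le_mul fun s t => by
    rw [dist_sub_left, ← smul_eq_mul, ← smul_eq_mul, dist_smul₀, coe_nnnorm]
  have hφ := (lipschitzWith_inv_sq_max (c := 1 / 2) (by simp)).comp haffine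
  have hφ_le (s : ℝ) : ‖(max (1 / 2) (1 - ρ * s) ^ 2)⁻¹‖ ≤ (4 : ℝ≥0) := by
    rw [Real.norm_of_nonneg (by positivity)]
    exact inv_sq_max_half_le _
  obtain ⟨q, hq₀, hq⟩ := exists_hasDerivAt_smul_comp_sub (b := fun t => -(B t * ρ ^ 2))
    (M := 4) (by fun_prop) hσ hφ (by simpa using hφ_le) hT
  exact ⟨q, hq₀, fun t ht => by simpa [mul_assoc] using hq t ht⟩

theorem eventually_exists_isPhaseCorrection {B σ : ℝ → ℝ} {T : ℝ} (hB : Continuous B)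
    (hσ : Continuous σ) (hT : 0 ≤ T) : ∀ᶠ ρ in 𝓝 0, ∃ q, IsPhaseCorrection B σ T ρ q := by
  obtain ⟨b, hb⟩ := isCompact_Icc.exists_bound_of_continuousOn (hB.continuousOn (s := Icc 0 T))
  obtain ⟨c, hc⟩ := isCompact_Icc.exists_bound_of_continuousOn (hσ.continuousOn (s := Icc 0 T))
  have hb₀ : 0 ≤ b := (norm_nonneg _).trans (hb 0 ⟨le_rfl, hT⟩)
  have hsmall_q : ∀ᶠ ρ : ℝ in 𝓝 0, b * (ρ ^ 2 * 4) * T ≤ 1 :=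
    (Continuous.tendsto' (by fun_prop) 0 0 (by simp)).eventually_le_const one_pos
  have hsmall_den : ∀ᶠ ρ : ℝ in 𝓝 0, |ρ| * (c + 1) ≤ 1 / 2 :=
    (Continuous.tendsto' (by fun_prop) 0 0 (by simp)).eventually_le_const one_half_pos
  filter_upwards [hsmall_q, hsmall_den] with ρ hρq hρden
  obtain ⟨q, hq₀, hq⟩ := exists_hasDerivAt_inv_sq_max_half hB hσ hT ρ
  have hq_le : ∀ t ∈ Icc 0 T, |q t| ≤ 1 := fun t ht => by
    have hbound := (convex_Icc 0 T).norm_image_sub_le_of_norm_hasDerivWithin_le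
      (fun s hs => (hq s hs).hasDerivWithinAt) (C := b * (ρ ^ 2 * 4))
      (fun s hs => by
        rw [norm_neg, norm_mul, Real.norm_of_nonneg (by positivity : 0 ≤ ρ ^ 2 * (_ ^ 2)⁻¹)]
        gcongr
        exacts [hb s hs, inv_sq_max_half_le _]) ⟨le_rfl, hT⟩ ht
    rw [hq₀, sub_zero, sub_zero, norm_eq_abs, norm_of_nonneg ht.1] at hbound
    exact hbound.trans (le_trans (by gcongr; exact ht.2) hρq)
  have hden : ∀ t ∈ Icc 0 T, 1 / 2 ≤ 1 - ρ * (σ t - q t) := fun t ht => by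
    have hprod : |ρ * (σ t - q t)| ≤ 1 / 2 := by
      rw [abs_mul]
      refine le_trans ?_ hρden
      gcongr
      exact (abs_sub _ _).trans (add_le_add (hc t ht) (hq_le t ht))
    linarith [le_of_abs_le hprod]
  refine ⟨q, hq₀, hq_le, hden, fun t ht => ?_⟩
  rw [radius_sq]
  simpa only [max_eq_right (hden t ht)] using hq t ht

/-! ### Expansion in the initial value -/

theorem isBigO_radius_sq_sub_sum {ι : Type*} {l : Filter ι} {ρ s : ι → ℝ}
    (hρ : Tendsto ρ l (𝓝 0)) (hs : s =O[l] fun _ => (1 : ℝ)) (n : ℕ) :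
    (fun i => radius (ρ i) (s i) ^ 2 - ρ i ^ 2 * ∑ k ∈ Finset.range n, (k + 1) * (ρ i * s i) ^ k)
      =O[l] fun i => ρ i ^ (n + 2) := by
  have hρs : (fun i => ρ i * s i) =O[l] ρ := by simpa using (isBigO_refl ρ l).mul hs
  have hseries := (isBigO_inv_one_sub_sq_sub_sum n).comp_tendsto (hρs.trans_tendsto hρ)
  refine ((isBigO_refl (fun i => ρ i ^ 2) l).mul (hseries.trans (hρs.pow n))).congr
    (fun i => ?_) fun i => by rw [← pow_add, add_comm]
  rw [radius_sq, ← mul_sub, Function.comp_apply]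

section Expansion

variable {B σ : ℝ → ℝ} {T : ℝ}

theorem IsPhaseCorrection.intervalIntegrable {ρ t : ℝ} {q : ℝ → ℝ}
    (hq : IsPhaseCorrection B σ T ρ q) (hB : Continuous B) (hσ : Continuous σ)
    (ht : t ∈ Icc 0 T) :
    IntervalIntegrable (fun s => B s * radius ρ (σ s - q s) ^ 2) MeasureTheory.volume 0 t := by
  have hsub : Icc 0 t ⊆ Icc 0 T := Icc_subset_Icc_right ht.2
  have hq_cont : ContinuousOn q (Icc 0 t) := fun s hs =>
    (hq.hasDerivAt s (hsub hs)).continuousAt.continuousWithinAt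
  have hradius : ContinuousOn (fun s => radius ρ (σ s - q s)) (Icc 0 t) :=
    continuousOn_const.div (by fun_prop) fun s hs => by linarith [hq.half_le s (hsub hs)]
  exact (hB.continuousOn.mul (hradius.pow 2)).intervalIntegrable_of_Icc ht.1

theorem IsPhaseCorrection.integral_eq_neg {ρ t : ℝ} {q : ℝ → ℝ}
    (hq : IsPhaseCorrection B σ T ρ q) (hB : Continuous B) (hσ : Continuous σ)
    (ht : t ∈ Icc 0 T) : ∫ s in 0..t, B s * radius ρ (σ s - q s) ^ 2 = -q t := by
  have hderiv : ∀ s ∈ uIcc 0 t,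
      HasDerivAt (fun s => -q s) (B s * radius ρ (σ s - q s) ^ 2) s := fun s hs => by
    rw [uIcc_of_le ht.1] at hs
    simpa only [neg_neg] using (hq.hasDerivAt s ⟨hs.1, hs.2.trans ht.2⟩).fun_neg
  rw [intervalIntegral.integral_eq_sub_of_hasDerivAt hderiv (hq.intervalIntegrable hB hσ ht),
    hq.map_zero, neg_zero, sub_zero]

variable {q : ℝ → ℝ → ℝ}

theorem isBigO_one_phaseCorrection (hq : ∀ᶠ ρ in 𝓝 0, IsPhaseCorrection B σ T ρ (q ρ)) :
    (fun p : ℝ × ℝ => q p.1 p.2) =O[𝓝 0 ×ˢ 𝓟 (Icc 0 T)] fun _ => (1 : ℝ) :=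
  .of_bound 1 <| eventually_prod_principal_iff.2 <| hq.mono fun ρ hρ t ht => by
    simpa using hρ.abs_le_one t ht

theorem isBigO_phaseCorrection_add_integral (hB : Continuous B) (hσ : Continuous σ)
    (hq : ∀ᶠ ρ in 𝓝 0, IsPhaseCorrection B σ T ρ (q ρ)) {n : ℕ} {R : ℝ → ℝ → ℝ}
    (hR : ∀ ρ, Continuous (R ρ))
    (hrR : (fun p : ℝ × ℝ => radius p.1 (σ p.2 - q p.1 p.2) ^ 2 - R p.1 p.2)
      =O[𝓝 0 ×ˢ 𝓟 (Icc 0 T)] fun p => p.1 ^ n) :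
    (fun p : ℝ × ℝ => q p.1 p.2 + ∫ s in 0..p.2, B s * R p.1 s)
      =O[𝓝 0 ×ˢ 𝓟 (Icc 0 T)] fun p => p.1 ^ n := by
  have hBrR : (fun p : ℝ × ℝ => B p.2 * (radius p.1 (σ p.2 - q p.1 p.2) ^ 2 - R p.1 p.2))
      =O[𝓝 0 ×ˢ 𝓟 (Icc 0 T)] fun p => p.1 ^ n := by
    simpa using (isBigO_one_comp_snd isCompact_Icc hB.continuousOn).mul hrR
  refine (isBigO_intervalIntegral_prod_principal
    (f := fun ρ s => B s * (radius ρ (σ s - q ρ s) ^ 2 - R ρ s)) hBrR).neg_left.congr' ?_ .rfl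
  rw [EventuallyEq, eventually_prod_principal_iff]
  filter_upwards [hq] with ρ hρ t ht
  simp only [mul_sub]
  rw [intervalIntegral.integral_sub (hρ.intervalIntegrable hB hσ ht)
    ((hB.fun_mul (hR ρ)).intervalIntegrable _ _), hρ.integral_eq_neg hB hσ ht]
  ring

theorem isBigO_radius_sq_sub_phase_sum (hσ : Continuous σ)
    (hq : ∀ᶠ ρ in 𝓝 0, IsPhaseCorrection B σ T ρ (q ρ)) (n : ℕ) :
    (fun p : ℝ × ℝ => radius p.1 (σ p.2 - q p.1 p.2) ^ 2 -
        p.1 ^ 2 * ∑ k ∈ Finset.range n, (k + 1) * (p.1 * (σ p.2 - q p.1 p.2)) ^ k)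
      =O[𝓝 0 ×ˢ 𝓟 (Icc 0 T)] fun p => p.1 ^ (n + 2) :=
  isBigO_radius_sq_sub_sum tendsto_fst
    ((isBigO_one_comp_snd isCompact_Icc hσ.continuousOn).sub (isBigO_one_phaseCorrection hq)) n

theorem isBigO_phaseCorrection_sq (hB : Continuous B) (hσ : Continuous σ)
    (hq : ∀ᶠ ρ in 𝓝 0, IsPhaseCorrection B σ T ρ (q ρ)) :
    (fun p : ℝ × ℝ => q p.1 p.2) =O[𝓝 0 ×ˢ 𝓟 (Icc 0 T)] fun p => p.1 ^ 2 := by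
  simpa using isBigO_phaseCorrection_add_integral hB hσ hq (R := fun _ _ => 0)
    (fun _ => continuous_const) (by simpa using isBigO_radius_sq_sub_phase_sum hσ hq 0)

theorem isBigO_phaseCorrection_add_sq_mul_integral (hB : Continuous B) (hσ : Continuous σ)
    (hq : ∀ᶠ ρ in 𝓝 0, IsPhaseCorrection B σ T ρ (q ρ)) :
    (fun p : ℝ × ℝ => q p.1 p.2 + p.1 ^ 2 * ∫ s in 0..p.2, B s)
      =O[𝓝 0 ×ˢ 𝓟 (Icc 0 T)] fun p => p.1 ^ 3 := by
  have hradius := isBigO_radius_sq_sub_phase_sum hσ hq 1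
  simpa [mul_comm] using isBigO_phaseCorrection_add_integral hB hσ hq
    (R := fun ρ _ => ρ ^ 2) (fun _ => continuous_const) (by simpa using hradius)

theorem isBigO_radius_sq_sub (hB : Continuous B) (hσ : Continuous σ)
    (hq : ∀ᶠ ρ in 𝓝 0, IsPhaseCorrection B σ T ρ (q ρ)) :
    (fun p : ℝ × ℝ => radius p.1 (σ p.2 - q p.1 p.2) ^ 2 -
        p.1 ^ 2 * (∑ k ∈ Finset.range 4, (k + 1) * (p.1 * σ p.2) ^ k +
          2 * p.1 ^ 3 * ∫ s in 0..p.2, B s))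
      =O[𝓝 0 ×ˢ 𝓟 (Icc 0 T)] fun p => p.1 ^ 6 := by
  have hσ₁ := isBigO_one_comp_snd (l := 𝓝 (0 : ℝ)) (isCompact_Icc (a := 0) (b := T)) hσ.continuousOn
  have hq₁ := isBigO_one_phaseCorrection hq
  have hq₂ := isBigO_phaseCorrection_sq hB hσ hq
  have hq₃ := isBigO_phaseCorrection_add_sq_mul_integral hB hσ hq
  have hseries := isBigO_radius_sq_sub_phase_sum hσ hq 4
  have hlin : (fun p : ℝ × ℝ => 2 * p.1 ^ 3 * (q p.1 p.2 + p.1 ^ 2 * ∫ s in 0..p.2, B s))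
      =O[𝓝 0 ×ˢ 𝓟 (Icc 0 T)] fun p => p.1 ^ 6 :=
    ((isBigO_const_mul_self 2 (fun p : ℝ × ℝ => p.1 ^ 3) _).mul hq₃).congr_right
      fun p => by ring
  have hquad : (fun p : ℝ × ℝ => 3 * p.1 ^ 4 * q p.1 p.2 * (2 * σ p.2 - q p.1 p.2))
      =O[𝓝 0 ×ˢ 𝓟 (Icc 0 T)] fun p => p.1 ^ 6 :=
    (((isBigO_const_mul_self 3 (fun p : ℝ × ℝ => p.1 ^ 4) _).mul hq₂).mul
      ((hσ₁.const_mul_left 2).sub hq₁)).congr_right fun p => by ring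
  have hcub : (fun p : ℝ × ℝ => 4 * p.1 ^ 4 * q p.1 p.2 *
        (p.1 * (3 * σ p.2 * (σ p.2 - q p.1 p.2) + q p.1 p.2 * q p.1 p.2)))
      =O[𝓝 0 ×ˢ 𝓟 (Icc 0 T)] fun p => p.1 ^ 6 := by
    have hfactor := ((hσ₁.const_mul_left 3).mul (hσ₁.sub hq₁)).add (hq₁.mul hq₁)
    exact (((isBigO_const_mul_self 4 (fun p : ℝ × ℝ => p.1 ^ 4) _).mul hq₂).mul
      ((tendsto_fst.isBigO_one ℝ).mul hfactor)).congr_right fun p => by ring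
  refine (((hseries.sub hlin).sub hquad).sub hcub).congr_left fun p => ?_
  simp only [Finset.sum_range_succ, Finset.sum_range_zero]
  push_cast
  ring

theorem isBigO_phaseCorrection_add_moments (hB : Continuous B) (hσ : Continuous σ) (hT : 0 ≤ T)
    (hq : ∀ᶠ ρ in 𝓝 0, IsPhaseCorrection B σ T ρ (q ρ)) :
    (fun ρ : ℝ => q ρ T +
        ρ ^ 2 * (∑ k ∈ Finset.range 4, (k + 1) * (∫ t in 0..T, B t * σ t ^ k) * ρ ^ k +
          (∫ t in 0..T, B t) ^ 2 * ρ ^ 3))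
      =O[𝓝 0] fun ρ => ρ ^ 6 := by
  have : Continuous fun t => ∫ s in 0..t, B s :=
    intervalIntegral.continuous_primitive (fun _ _ => hB.intervalIntegrable _ _) 0
  have hexp := isBigO_phaseCorrection_add_integral hB hσ hq
    (R := fun ρ t => ρ ^ 2 * (∑ k ∈ Finset.range 4, (k + 1) * (ρ * σ t) ^ k +
      2 * ρ ^ 3 * ∫ s in 0..t, B s))
    (fun ρ => by fun_prop) (isBigO_radius_sq_sub hB hσ hq)
  have hpair : Tendsto (fun ρ : ℝ => (ρ, T)) (𝓝 0) (𝓝 0 ×ˢ 𝓟 (Icc 0 T)) :=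
    tendsto_id.prodMk (tendsto_principal.2 (.of_forall fun _ => ⟨hT, le_rfl⟩))
  refine (hexp.comp_tendsto hpair).congr_left fun ρ => ?_
  simp only [Function.comp_apply, add_right_inj]
  calc ∫ t in 0..T, B t * (ρ ^ 2 * (∑ k ∈ Finset.range 4, (k + 1) * (ρ * σ t) ^ k +
        2 * ρ ^ 3 * ∫ s in 0..t, B s))
      = ∫ t in 0..T, ρ ^ 2 * (∑ k ∈ Finset.range 4, (k + 1) * ρ ^ k * (B t * σ t ^ k) +
          2 * ρ ^ 3 * (B t * ∫ s in 0..t, B s)) := by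
        congr 1 with t
        rw [mul_left_comm, mul_add, Finset.mul_sum, mul_left_comm (B t)]
        congr! 3 with k
        rw [mul_pow]
        ring
    _ = ρ ^ 2 * (∑ k ∈ Finset.range 4, (k + 1) * ρ ^ k * (∫ t in 0..T, B t * σ t ^ k) +
          2 * ρ ^ 3 * ((∫ t in 0..T, B t) ^ 2 / 2)) := by
        rw [intervalIntegral.integral_const_mul, intervalIntegral.integral_add
          (Continuous.intervalIntegrable (by fun_prop) _ _)
          (Continuous.intervalIntegrable (by fun_prop) _ _),
          intervalIntegral.integral_finsetSum
            fun k _ => Continuous.intervalIntegrable (by fun_prop) _ _]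
        simp only [intervalIntegral.integral_const_mul, integral_mul_integral_eq_sq_div_two hB]
    _ = _ := by
        simp only [mul_right_comm]
        ring

end Expansion

section Center

variable {A B σ : ℝ → ℝ}

theorem HasCenterAtZero.eventually_phaseCorrection_eq_zero {q : ℝ → ℝ → ℝ}
    (h : HasCenterAtZero (quarticField A B)) (hσ : ∀ t, HasDerivAt σ (A t) t)
    (hσ_per : σ (2 * π) = σ 0)
    (hq : ∀ᶠ ρ in 𝓝 0, IsPhaseCorrection B σ (2 * π) ρ (q ρ)) :
    ∀ᶠ ρ in 𝓝[≠] 0, q ρ (2 * π) = 0 := by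
  obtain ⟨ε, hε, hcenter⟩ := h
  have hsmall : ∀ᶠ ρ in 𝓝 0, |radius ρ (σ 0)| < ε := by
    have hcont : ContinuousAt (fun ρ => |radius ρ (σ 0)|) 0 :=
      (ContinuousAt.div (by fun_prop) (by fun_prop) (by simp)).abs
    exact hcont.eventually_lt_const (by simpa [radius] using hε)
  filter_upwards [nhdsWithin_le_nhds hq, nhdsWithin_le_nhds hsmall, self_mem_nhdsWithin]
    with ρ hqρ hρε (hρ : ρ ≠ 0)
  have hclosed := hcenter (fun t => radius ρ (σ t - q ρ t))
    (by simpa only [hqρ.map_zero, sub_zero] using hρε)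
    fun t ht => hqρ.hasDerivAt_radius (hσ t) ht
  have hphase := radius_injective hρ hclosed
  linarith [hqρ.map_zero]

theorem HasCenterAtZero.integral_mul_pow_eq_zero (h : HasCenterAtZero (quarticField A B))
    (hB : Continuous B) (hσ : ∀ t, HasDerivAt σ (A t) t) (hσ_per : σ (2 * π) = σ 0) :
    ∀ k < 4, ∫ t in 0..2 * π, B t * σ t ^ k = 0 := by
  have hσ_cont : Continuous σ := continuous_iff_continuousAt.2 fun t => (hσ t).continuousAt
  obtain ⟨q, hq⟩ := (eventually_exists_isPhaseCorrection hB hσ_cont two_pi_pos.le).choice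
  set m : ℕ → ℝ := fun k => ∫ t in 0..2 * π, B t * σ t ^ k
  set c : ℕ → ℝ := fun k => (k + 1) * m k + if k = 3 then m 0 ^ 2 else 0
  have hexp : (fun ρ : ℝ => ∑ k ∈ Finset.range 4, c k * ρ ^ k) =O[𝓝[≠] 0] (· ^ 4) := by
    have hdisp := (isBigO_phaseCorrection_add_moments hB hσ_cont two_pi_pos.le hq).mono
      (nhdsWithin_le_nhds (s := {0}ᶜ))
    refine (((isBigO_refl (fun ρ : ℝ => (ρ ^ 2)⁻¹) (𝓝[≠] 0)).mul hdisp).congr' ?_ ?_)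
    · filter_upwards [h.eventually_phaseCorrection_eq_zero hσ hσ_per hq, self_mem_nhdsWithin]
        with ρ hqρ (hρ : ρ ≠ 0)
      rw [hqρ, zero_add, inv_mul_cancel_left₀ (pow_ne_zero 2 hρ)]
      simp [c, m, add_mul, Finset.sum_add_distrib]
    · filter_upwards [self_mem_nhdsWithin] with ρ (hρ : ρ ≠ 0)
      field_simp
  have hc := eq_zero_of_isBigO_sum_mul_pow hexp
  have hm₀ : m 0 = 0 := by simpa [c] using hc 0
  intro k hk
  have hcancel : (k + 1 : ℝ) * m k = 0 := by simpa [c, hm₀] using hc k hk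
  exact (mul_eq_zero.1 hcancel).resolve_left k.cast_add_one_ne_zero

end Center

/-! ### Cubic trigonometric coefficients -/

/-- The restriction to the unit circle of the binary cubic form
`a x³ + b x² y + c x y² + d y³`. -/
noncomputable def cubicTrig (a b c d θ : ℝ) : ℝ :=
  a * cos θ ^ 3 + b * cos θ ^ 2 * sin θ + c * cos θ * sin θ ^ 2 + d * sin θ ^ 3

theorem contDiff_cubicTrig (a b c d : ℝ) {n : WithTop ℕ∞} : ContDiff ℝ n (cubicTrig a b c d) := by
  unfold cubicTrig
  fun_prop

theorem cubicTrig_periodic (a b c d : ℝ) : Function.Periodic (cubicTrig a b c d) (2 * π) :=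
  fun θ => by simp only [cubicTrig, cos_add_two_pi, sin_add_two_pi]

theorem integral_cubicTrig_mul_cos_pow (a b c d : ℝ) (n : ℕ) :
    ∫ θ in 0..2 * π, cubicTrig a b c d θ * cos θ ^ n =
      ((n + 2) * a + c) / (n + 3) * ∫ θ in 0..2 * π, cos θ ^ (n + 1) := by
  have hsin (m k : ℕ) (e : ℝ) : ∫ θ in 0..2 * π, e * (sin θ ^ (2 * m + 1) * cos θ ^ k) = 0 := by
    rw [intervalIntegral.integral_const_mul, integral_sin_pow_odd_mul_cos_pow, cos_two_pi,
      cos_zero, intervalIntegral.integral_same, mul_zero]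
  have hcos : ∫ θ in 0..2 * π, cos θ ^ (n + 3) =
      (n + 2) / (n + 3) * ∫ θ in 0..2 * π, cos θ ^ (n + 1) := by
    rw [integral_cos_pow, sin_two_pi, sin_zero]
    push_cast
    ring
  calc ∫ θ in 0..2 * π, cubicTrig a b c d θ * cos θ ^ n
      = ∫ θ in 0..2 * π, ((a - c) * cos θ ^ (n + 3) + c * cos θ ^ (n + 1) +
          b * (sin θ ^ (2 * 0 + 1) * cos θ ^ (n + 2)) +
          d * (sin θ ^ (2 * 1 + 1) * cos θ ^ n)) := by
        congr 1 with θ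
        rw [cubicTrig, sin_sq]
        ring
    _ = (a - c) * (∫ θ in 0..2 * π, cos θ ^ (n + 3)) + c * ∫ θ in 0..2 * π, cos θ ^ (n + 1) := by
        rw [intervalIntegral.integral_add, intervalIntegral.integral_add,
          intervalIntegral.integral_add]
        · rw [hsin, hsin, add_zero, add_zero, intervalIntegral.integral_const_mul,
            intervalIntegral.integral_const_mul]
        all_goals exact Continuous.intervalIntegrable (by fun_prop) _ _
    _ = _ := by
        rw [hcos]
        field_simp
        ring

theorem add_eq_zero_of_integral_cubicTrig_mul_cos_pow_odd {a b c d : ℝ} {m : ℕ}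
    (h : ∫ θ in 0..2 * π, cubicTrig a b c d θ * cos θ ^ (2 * m + 1) = 0) :
    (2 * m + 3) * a + c = 0 := by
  rw [integral_cubicTrig_mul_cos_pow, show 2 * m + 1 + 1 = 2 * (m + 1) by ring] at h
  have hnum := (div_eq_zero_iff.1 <|
    (mul_eq_zero.1 h).resolve_right (integral_cos_pow_even_pos (m + 1)).ne').resolve_right
      (by positivity)
  push_cast at hnum
  linarith

/- The combinations `3 a + c` and `b + 3 d` are the coefficients of half the Laplacian of the form,
which rotates as a linear form. -/
theorem cubicTrig_eq_cubicTrig_sub (a b c d α θ : ℝ) :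
    cubicTrig a b c d θ = cubicTrig
      (cubicTrig a b c d α)
      ((b + 3 * d) * cos α - (3 * a + c) * sin α - 3 * cubicTrig a b c d (α + π / 2))
      ((3 * a + c) * cos α + (b + 3 * d) * sin α - 3 * cubicTrig a b c d α)
      (cubicTrig a b c d (α + π / 2)) (θ - α) := by
  have hcos : cos θ = cos α * cos (θ - α) - sin α * sin (θ - α) := by
    rw [← cos_add, add_sub_cancel]
  have hsin : sin θ = sin α * cos (θ - α) + cos α * sin (θ - α) := by
    rw [← sin_add, add_sub_cancel]
  simp only [cubicTrig, hcos, hsin, sin_add_pi_div_two, cos_add_pi_div_two]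
  linear_combination
    (((3 * a + c) * cos α + (b + 3 * d) * sin α) * cos (θ - α) * sin (θ - α) ^ 2 +
      ((b + 3 * d) * cos α - (3 * a + c) * sin α) * cos (θ - α) ^ 2 * sin (θ - α)) *
    sin_sq_add_cos_sq α

theorem HasCenterAtZero.integral_cubicTrig_mul_cos_pow_eq_zero {k α a b c d : ℝ} (hk : k ≠ 0)
    (h : HasCenterAtZero
      (quarticField (fun θ => k * sin (θ - α)) fun θ => cubicTrig a b c d (θ - α)))
    {n : ℕ} (hn : n < 4) : ∫ θ in 0..2 * π, cubicTrig a b c d θ * cos θ ^ n = 0 := by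
  have hσ (θ : ℝ) : HasDerivAt (fun θ => -k * cos (θ - α)) (k * sin (θ - α)) θ := by
    simpa using ((hasDerivAt_cos (θ - α)).comp_sub_const θ α).const_mul (-k)
  have hσ_per : -k * cos (2 * π - α) = -k * cos (0 - α) := by rw [cos_two_pi_sub, zero_sub, cos_neg]
  have hmoment := h.integral_mul_pow_eq_zero
    ((contDiff_cubicTrig a b c d (n := 0)).continuous.comp (by fun_prop)) hσ hσ_per n hn
  have hper : Function.Periodic (fun θ => cubicTrig a b c d θ * cos θ ^ n) (2 * π) :=
    (cubicTrig_periodic a b c d).mul (cos_periodic.comp (· ^ n))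
  simp only [mul_pow, mul_left_comm _ ((-k) ^ n), intervalIntegral.integral_const_mul] at hmoment
  rw [integral_comp_sub_of_periodic hper α] at hmoment
  exact (mul_eq_zero.1 hmoment).resolve_left (pow_ne_zero n (neg_ne_zero.2 hk))

theorem hasCenterAtZero_sin_cubicTrig_sub (k α b d : ℝ) :
    HasCenterAtZero
      (quarticField (fun θ => k * sin (θ - α)) fun θ => cubicTrig 0 b 0 d (θ - α)) := by
  refine hasCenterAtZero_of_reversible (α := α) ?_ (fun θ => ?_) fun θ => ?_
  · have := contDiff_cubicTrig 0 b 0 d (n := 1)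
    exact ContDiff.locallyLipschitz (𝕂 := ℝ) (by unfold quarticField; fun_prop)
  · funext r
    simp only [quarticField, add_sub_right_comm, sin_add_two_pi, cubicTrig_periodic _ _ _ _ _]
  · have hreflect : 2 * α - θ - α = -(θ - α) := by ring
    funext r
    simp only [quarticField, cubicTrig, Pi.neg_apply, hreflect, sin_neg, cos_neg]
    ring

theorem hasCenterAtZero_sin_cubicTrig_iff {k : ℝ} (hk : k ≠ 0) (α a b c d : ℝ) :
    HasCenterAtZero (quarticField (fun θ => k * sin (θ - α)) fun θ => cubicTrig a b c d (θ - α)) ↔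
      a = 0 ∧ c = 0 := by
  refine ⟨fun h => ?_, fun ⟨ha, hc⟩ => ?_⟩
  · have h₁ := add_eq_zero_of_integral_cubicTrig_mul_cos_pow_odd (m := 0)
      (h.integral_cubicTrig_mul_cos_pow_eq_zero hk (by norm_num))
    have h₃ := add_eq_zero_of_integral_cubicTrig_mul_cos_pow_odd (m := 1)
      (h.integral_cubicTrig_mul_cos_pow_eq_zero hk (by norm_num))
    push_cast at h₁ h₃
    constructor <;> linarith
  · rw [ha, hc]
    exact hasCenterAtZero_sin_cubicTrig_sub k α b d

theorem hasCenterAtZero_sin_sub_iff {k : ℝ} (hk : k ≠ 0) (α a b c d : ℝ) :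
    HasCenterAtZero (quarticField (fun θ => k * sin (θ - α)) (cubicTrig a b c d)) ↔
      (3 * a + c) * cos α + (b + 3 * d) * sin α = 0 ∧ cubicTrig a b c d α = 0 := by
  have hrotate := funext (cubicTrig_eq_cubicTrig_sub a b c d α)
  rw [hrotate, hasCenterAtZero_sin_cubicTrig_iff hk, ← hrotate]
  constructor <;> rintro ⟨h₁, h₂⟩ <;> constructor <;> linarith

/-- Corollary 2.5: the equation `dr/dθ = r (P₁ r + P₃ r³)` has a center at `r = 0` iff
`p₁₀p₂₁ − p₀₁p₁₂ + 3p₁₀p₀₃ − 3p₀₁p₃₀ = 0` and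
`p₃₀p₀₁³ − p₂₁p₀₁²p₁₀ + p₁₂p₀₁p₁₀² − p₀₃p₁₀³ = 0`. -/
theorem quartic_center_conditions
    (p10 p01 p30 p21 p12 p03 : ℝ) (h : p10 ^ 2 + p01 ^ 2 ≠ 0)
    (P1 P3 : ℝ → ℝ)
    (hP1 : ∀ θ, P1 θ = p10 * Real.cos θ + p01 * Real.sin θ)
    (hP3 : ∀ θ, P3 θ = p30 * Real.cos θ ^ 3 + p21 * Real.cos θ ^ 2 * Real.sin θ +
      p12 * Real.cos θ * Real.sin θ ^ 2 + p03 * Real.sin θ ^ 3) :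
    HasCenterAtZero (fun θ r => r * (P1 θ * r + P3 θ * r ^ 3)) ↔
      (p10 * p21 - p01 * p12 + 3 * p10 * p03 - 3 * p01 * p30 = 0 ∧
       p30 * p01 ^ 3 - p21 * p01 ^ 2 * p10 + p12 * p01 * p10 ^ 2 - p03 * p10 ^ 3 = 0) := by
  obtain ⟨k, α, hcos, hsin⟩ := exists_mul_cos_sin p01 (-p10)
  obtain rfl : p10 = -(k * sin α) := by rw [← hsin, neg_neg]
  subst hcos
  have hk : k ≠ 0 := by
    rintro rfl
    simp at h
  have hfield : (fun θ r => r * (P1 θ * r + P3 θ * r ^ 3)) =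
      quarticField (fun θ => k * sin (θ - α)) (cubicTrig p30 p21 p12 p03) := by
    funext θ r
    rw [quarticField, cubicTrig, hP1, hP3, sin_sub]
    ring
  have htrace : -(k * sin α) * p21 - k * cos α * p12 + 3 * -(k * sin α) * p03 -
      3 * (k * cos α) * p30 = -k * ((3 * p30 + p12) * cos α + (p21 + 3 * p03) * sin α) := by
    ring
  have hvalue : p30 * (k * cos α) ^ 3 - p21 * (k * cos α) ^ 2 * -(k * sin α) +
      p12 * (k * cos α) * (-(k * sin α)) ^ 2 - p03 * (-(k * sin α)) ^ 3 =
      k ^ 3 * cubicTrig p30 p21 p12 p03 α := by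
    rw [cubicTrig]
    ring
  rw [hfield, hasCenterAtZero_sin_sub_iff hk, htrace, hvalue,
    mul_eq_zero_iff_left (neg_ne_zero.2 hk), mul_eq_zero_iff_left (pow_ne_zero 3 hk)]
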